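/- If G is a finite simple graph with n ≥ 4 vertices and fewer than (19n − 28)/8 edges, then G has a forest cut. -/

import Mathlib

/-!
Consider a minimal counterexample `G` with `n` vertices. If a set `S` of vertices can be deleted and
some edges added so that altogether at least `19|S|/8` edges are lost, then the smaller graph has
few edges too, hence has a forest cut, and this cut must not extend to `G` (`Ctx.reduce`). Moreover
the neighbourhood of a small set never induces a forest (`Ctx.nbr_not_forest`). Cuts are extended
by means of two observations: a clique meets only one side of a cut, so a vertex whose neighbours
form a clique of the reduced graph can be put on that side; and a vertex can join the cut if it has
at most one neighbour in it.

These two tools give the local structure of `G`.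
* The minimum degree is at least four, and each vertex `v` of degree four lies in a `K₄`, whose
  other three vertices are called the mates of `v`; the fourth neighbour of `v` is adjacent to at
  most one mate (`Ctx.exists_str`).
* A mate of a vertex of degree four has degree at least five (`Ctx.mate_degree_ne_four`).
* A vertex of degree five is a mate of at most one vertex of degree four
  (`Ctx.eq_of_degree_five`): otherwise it can be deleted along with two such vertices, and three
  edges added.

A vertex of degree six is a mate of at most five vertices of degree four, since the mates of such a
vertex are adjacent to each other. Now give each vertex the charge `4 deg`, and let every mate of a
vertex of degree four send charge `1` to it. All final charges are at least `19` (`Ctx.charge`), so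
`8|E| = 4 ∑ deg ≥ 19 n`, contradicting `8|E| < 19 n - 28`.
-/

open SimpleGraph

/-- `M` is a vertex cut of `G`: the complement of `M` can be partitioned into two nonempty
sets `L`, `R` with no edge of `G` joining a vertex of `L` to a vertex of `R`. -/
def IsVertexCut {V : Type*} (G : SimpleGraph V) (M : Set V) : Prop :=
  ∃ L R : Set V, L.Nonempty ∧ R.Nonempty ∧ Disjoint L R ∧ L ∪ R = Mᶜ ∧
    ∀ x ∈ L, ∀ y ∈ R, ¬ G.Adj x y

/-- `(M, L, R)` is a separation of `G`. -/
def IsSeparation {V : Type*} (G : SimpleGraph V) (M L R : Set V) : Prop :=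
  L.Nonempty ∧ R.Nonempty ∧ M ∪ L ∪ R = Set.univ ∧
  Disjoint M L ∧ Disjoint M R ∧ Disjoint L R ∧
  ∀ x ∈ L, ∀ y ∈ R, ¬ G.Adj x y

/-- The quality function `q_{α,β}(G) = α|V(G)| − |E(G)| − β`. -/
noncomputable def quality {V : Type*} (α β : ℝ) (G : SimpleGraph V) : ℝ :=
  α * Nat.card V - Nat.card G.edgeSet - β

/-- degree of a vertex as the cardinality of its neighbor set. -/
noncomputable def vdeg {V : Type*} (G : SimpleGraph V) (v : V) : ℕ :=
  (G.neighborSet v).ncard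

/-- The class of forests. -/
def ForestClass : ∀ (W : Type), SimpleGraph W → Prop := fun _ H => H.IsAcyclic

/-- The class of bipartite graphs. -/
def BipartiteClass : ∀ (W : Type), SimpleGraph W → Prop := fun _ H => H.Colorable 2

/-- `G` has a `Ψ`-cut: a vertex cut whose induced subgraph lies in `Ψ`. -/
def HasPsiCut (Ψ : ∀ (W : Type), SimpleGraph W → Prop) {V : Type} (G : SimpleGraph V) : Prop :=
  ∃ M : Set V, IsVertexCut G M ∧ Ψ ↥M (G.induce M)

/-- `G` has a forest cut. -/
def HasForestCut {V : Type*} (G : SimpleGraph V) : Prop :=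
  ∃ M : Set V, IsVertexCut G M ∧ (G.induce M).IsAcyclic

/-- `G` has a bipartite cut. -/
def HasBipartiteCut {V : Type*} (G : SimpleGraph V) : Prop :=
  ∃ M : Set V, IsVertexCut G M ∧ (G.induce M).Colorable 2

/-- `G` has an independent cut. -/
def HasIndependentCut {V : Type*} (G : SimpleGraph V) : Prop :=
  ∃ M : Set V, IsVertexCut G M ∧ ∀ x ∈ M, ∀ y ∈ M, ¬ G.Adj x y

/-- `G` is a minimal counterexample for the class `Ψ` and parameters `α`, `β`. -/
def MinCounterexample (Ψ : ∀ (W : Type), SimpleGraph W → Prop) (α β : ℝ)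
    {V : Type} (G : SimpleGraph V) : Prop :=
  4 ≤ Nat.card V ∧ 0 < quality α β G ∧ ¬ HasPsiCut Ψ G ∧
  ∀ (W : Type) (H : SimpleGraph W),
    4 ≤ Nat.card W → Nat.card W < Nat.card V → 0 < quality α β H → HasPsiCut Ψ H

/-- `T0`: a triangle together with an isolated vertex. -/
def graphT0 : SimpleGraph (Fin 4) := SimpleGraph.fromEdgeSet {s(0,1), s(0,2), s(1,2)}

/-- `T1`: a triangle with an extra vertex joined to exactly one triangle vertex. -/
def graphT1 : SimpleGraph (Fin 4) := SimpleGraph.fromEdgeSet {s(0,1), s(0,2), s(1,2), s(2,3)}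

/-- The diamond graph `K4` minus one edge. -/
def diamondGraph : SimpleGraph (Fin 4) := (⊤ : SimpleGraph (Fin 4)).deleteEdges {s(0,1)}

/-- Number of edges of `G` with one endpoint in `X` and the other outside `X`. -/
noncomputable def crossEdges {V : Type*} (G : SimpleGraph V) (X : Set V) : ℕ :=
  {e : Sym2 V | e ∈ G.edgeSet ∧ ∃ x ∈ X, ∃ y ∉ X, e = s(x,y)}.ncard

namespace ForestCut

variable {V : Type*}

/-! ### Forest cuts as labellings -/

/-- `G[M]` is a forest, phrased through degeneracy: every nonempty finite `W ⊆ M` contains a vertex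
with at most one neighbour in `W`. Unlike acyclicity of an induced subgraph this needs no subtypes,
and adding a vertex with at most one neighbour in `M` visibly preserves it. -/
def Forest (G : SimpleGraph V) (M : V → Prop) : Prop :=
  ∀ W : Finset V, W.Nonempty → (∀ w ∈ W, M w) →
    ∃ w ∈ W, ∀ p ∈ W, ∀ q ∈ W, G.Adj w p → G.Adj w q → p = q

/-- A labelling describing a forest separation, possibly with empty sides: the vertices labelled `0`
form the cut, and `G` has no edge between distinct nonzero labels. -/
structure Good (G : SimpleGraph V) (c : V → ℕ) : Prop where
  side : ∀ p q, G.Adj p q → c p = 0 ∨ c q = 0 ∨ c p = c q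
  forest : Forest G (fun v => c v = 0)

/-- `G` has a forest cut that separates two vertices of `A`. Graphs on a vertex set `A ⊆ V` are
encoded as graphs on `V` all of whose edges lie inside `A`, so that deleting vertices does not
change the ambient type. -/
def Cut (A : Finset V) (G : SimpleGraph V) : Prop :=
  ∃ c, Good G c ∧ ∃ p ∈ A, ∃ q ∈ A, c p ≠ 0 ∧ c q ≠ 0 ∧ c p ≠ c q

/-- The number of edges. -/
noncomputable def ec (G : SimpleGraph V) : ℕ := G.edgeSet.ncard

/-- `G` is a minimal counterexample with vertex set `A`. -/
structure Ctx (A : Finset V) (G : SimpleGraph V) : Prop where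
  ih : ∀ (B : Finset V) (H : SimpleGraph V), B.card < A.card → 4 ≤ B.card →
    (∀ p q, H.Adj p q → p ∈ B) → 8 * ec H + 28 < 19 * B.card → Cut B H
  sub : ∀ p q, G.Adj p q → p ∈ A
  four : 4 ≤ A.card
  few : 8 * ec G + 28 < 19 * A.card
  nocut : ¬ Cut A G

theorem Forest.mono {G : SimpleGraph V} {M N : V → Prop} (h : Forest G M)
    (hNM : ∀ v, N v → M v) : Forest G N :=
  fun W hW hWN => h W hW fun w hw => hNM w (hWN w hw)

/-- A forest stays a forest when a vertex `v` with at most one neighbour in the enlarged set is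
added to it. -/
theorem Forest.insert {G : SimpleGraph V} {M N : V → Prop} (h : Forest G M) (v : V)
    (hN : ∀ w, N w → w = v ∨ M w)
    (hv : ∀ p q, N p → N q → G.Adj v p → G.Adj v q → p = q) : Forest G N := by
  intro W hW hWN
  by_cases hvW : v ∈ W
  · exact ⟨v, hvW, fun p hp q hq => hv p q (hWN p hp) (hWN q hq)⟩
  · exact h W hW fun w hw => (hN w (hWN w hw)).resolve_left (by rintro rfl; exact hvW hw)

theorem Forest.no_triangle {G : SimpleGraph V} {M : V → Prop} (h : Forest G M) {x y z : V}
    (hx : M x) (hy : M y) (hz : M z) (hxy : G.Adj x y) (hxz : G.Adj x z) (hyz : G.Adj y z) :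
    False := by
  classical
  obtain ⟨w, hw, H⟩ := h {x, y, z} ⟨x, by simp⟩ (by simp [hx, hy, hz])
  have := hxy.ne
  have := hxz.ne
  have := hyz.ne
  simp only [Finset.mem_insert, Finset.mem_singleton] at hw H
  rcases hw with rfl | rfl | rfl
  · exact hyz.ne (H y (by simp) z (by simp) hxy hxz)
  · exact hxz.ne (H x (by simp) z (by simp) hxy.symm hyz)
  · exact hxy.ne (H x (by simp) y (by simp) hxz.symm hyz.symm)

theorem forest_two (G : SimpleGraph V) (x y : V) : Forest G (fun v => v = x ∨ v = y) := by
  have h0 : Forest G (fun _ => False) := by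
    rintro W ⟨w, hw⟩ h
    exact (h w hw).elim
  have h1 : Forest G (fun v => v = x) := h0.insert x (by simp) (by rintro p q rfl rfl _ _; rfl)
  refine h1.insert y (by grind) ?_
  intro p q hp hq h1 h2
  have := h1.ne
  have := h2.ne
  grind

theorem forest_three (G : SimpleGraph V) (x y z : V)
    (h : ¬ (G.Adj x y ∧ G.Adj x z ∧ G.Adj y z)) :
    Forest G (fun v => v = x ∨ v = y ∨ v = z) := by
  have hs := G.symm
  have hl := G.loopless
  by_cases h1 : G.Adj x y ∧ G.Adj x z
  · refine (forest_two G x z).insert y (by grind) ?_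
    grind [SimpleGraph.adj_comm, SimpleGraph.irrefl]
  · refine (forest_two G y z).insert x (by grind) ?_
    grind [SimpleGraph.adj_comm, SimpleGraph.irrefl]

/-- Four vertices that span no triangle and no 4-cycle induce a forest. -/
theorem forest_four (G : SimpleGraph V) (x y z w : V)
    (h1 : ¬ (G.Adj x y ∧ G.Adj x z ∧ G.Adj y z))
    (h2 : ¬ (G.Adj x y ∧ G.Adj x w ∧ G.Adj y w))
    (h3 : ¬ (G.Adj x z ∧ G.Adj x w ∧ G.Adj z w))
    (h4 : ¬ (G.Adj y z ∧ G.Adj y w ∧ G.Adj z w))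
    (h5 : ¬ (G.Adj x y ∧ G.Adj y z ∧ G.Adj z w ∧ G.Adj w x))
    (h6 : ¬ (G.Adj x y ∧ G.Adj y w ∧ G.Adj w z ∧ G.Adj z x))
    (h7 : ¬ (G.Adj x z ∧ G.Adj z y ∧ G.Adj y w ∧ G.Adj w x)) :
    Forest G (fun v => v = x ∨ v = y ∨ v = z ∨ v = w) := by
  have key : ∀ a b c d : V, ¬ (G.Adj b c ∧ G.Adj b d ∧ G.Adj c d) →
      ¬ (G.Adj a b ∧ G.Adj a c) → ¬ (G.Adj a b ∧ G.Adj a d) → ¬ (G.Adj a c ∧ G.Adj a d) →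
      Forest G (fun v => v = a ∨ v = b ∨ v = c ∨ v = d) := by
    intro a b c d h k1 k2 k3
    refine (forest_three G b c d h).insert a (by grind) ?_
    grind [SimpleGraph.adj_comm, SimpleGraph.irrefl]
  have e1 := G.adj_comm x y
  have e2 := G.adj_comm x z
  have e3 := G.adj_comm x w
  have e4 := G.adj_comm y z
  have e5 := G.adj_comm y w
  have e6 := G.adj_comm z w
  by_cases c1 : ¬ (G.Adj x y ∧ G.Adj x z) ∧ ¬ (G.Adj x y ∧ G.Adj x w) ∧ ¬ (G.Adj x z ∧ G.Adj x w)
  · exact key x y z w h4 c1.1 c1.2.1 c1.2.2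
  by_cases c2 : ¬ (G.Adj y x ∧ G.Adj y z) ∧ ¬ (G.Adj y x ∧ G.Adj y w) ∧ ¬ (G.Adj y z ∧ G.Adj y w)
  · exact (key y x z w h3 c2.1 c2.2.1 c2.2.2).mono (by grind)
  by_cases c3 : ¬ (G.Adj z x ∧ G.Adj z y) ∧ ¬ (G.Adj z x ∧ G.Adj z w) ∧ ¬ (G.Adj z y ∧ G.Adj z w)
  · exact (key z x y w h2 c3.1 c3.2.1 c3.2.2).mono (by grind)
  by_cases c4 : ¬ (G.Adj w x ∧ G.Adj w y) ∧ ¬ (G.Adj w x ∧ G.Adj w z) ∧ ¬ (G.Adj w y ∧ G.Adj w z)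
  · exact (key w x y z h1 c4.1 c4.2.1 c4.2.2).mono (by grind)
  exfalso
  clear key
  grind

/-- If neither `d` nor `e` is adjacent to both `b` and `c`, then a cycle on `b, c, d, e` uses the
edge `de` and leaves both `d` and `e` towards `{b, c}`. -/
theorem forest_four_of {G : SimpleGraph V} {b c d e : V} (h : ¬ (G.Adj b d ∧ G.Adj c d))
    (h' : ¬ (G.Adj b e ∧ G.Adj c e))
    (hC : ¬ (G.Adj d e ∧ (G.Adj d b ∨ G.Adj d c) ∧ (G.Adj e b ∨ G.Adj e c))) :
    Forest G (fun v => v = b ∨ v = c ∨ v = d ∨ v = e) := by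
  have s1 := G.adj_comm b d
  have s2 := G.adj_comm c d
  have s3 := G.adj_comm b e
  have s4 := G.adj_comm c e
  have s5 := G.adj_comm d e
  apply forest_four <;> grind

theorem Forest.isAcyclic {G : SimpleGraph V} {M : Set V} (h : Forest G (fun v => v ∈ M)) :
    (G.induce M).IsAcyclic := by
  classical
  intro v p hp
  obtain ⟨w, hw, H⟩ := h (p.support.toFinset.image Subtype.val)
    ⟨v.1, by simp [Subtype.exists]⟩ (by
      intro w hw
      simp only [Finset.mem_image] at hw
      obtain ⟨w, -, rfl⟩ := hw
      exact w.2)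
  simp only [Finset.mem_image, List.mem_toFinset] at hw H
  obtain ⟨w, hw, rfl⟩ := hw
  have h2 := hp.ncard_neighborSet_toSubgraph_eq_two hw
  obtain ⟨a, b, hab, hs⟩ := Set.ncard_eq_two.mp h2
  have ha : p.toSubgraph.Adj w a := by
    have : a ∈ p.toSubgraph.neighborSet w := by rw [hs]; simp
    exact this
  have hb : p.toSubgraph.Adj w b := by
    have : b ∈ p.toSubgraph.neighborSet w := by rw [hs]; simp
    exact this
  have ha' : a ∈ p.support := by
    simpa using p.toSubgraph.edge_vert ha.symm
  have hb' : b ∈ p.support := by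
    simpa using p.toSubgraph.edge_vert hb.symm
  exact hab (Subtype.ext (H a.1 ⟨a, ha', rfl⟩ b.1 ⟨b, hb', rfl⟩ ha.adj_sub hb.adj_sub))

theorem Cut.hasForestCut {A : Finset V} {G : SimpleGraph V} (h : Cut A G) : HasForestCut G := by
  obtain ⟨c, hc, p, -, q, -, hp, hq, hpq⟩ := h
  refine ⟨{v | c v = 0}, ⟨{v | c v = c p}, {v | c v ≠ 0 ∧ c v ≠ c p}, ⟨p, rfl⟩,
    ⟨q, hq, hpq.symm⟩, ?_, ?_, ?_⟩, hc.forest.isAcyclic⟩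
  · rw [Set.disjoint_left]
    rintro x hx ⟨-, hx'⟩
    exact hx' hx
  · ext x
    simp only [Set.mem_union, Set.mem_ofPred_eq, Set.mem_compl_iff]
    grind
  · rintro x hx y ⟨hy, hy'⟩ hxy
    have := hc.side x y hxy
    simp only [Set.mem_ofPred_eq] at hx
    grind

/-- A labelling of `G'` can be changed on a set `S` of deleted vertices, provided that each vertex
of `S` that joins the cut has at most one neighbour in it. -/
theorem Good.extend {G G' : SimpleGraph V} {S : Finset V} {c c' : V → ℕ} (hc : Good G' c)
    (hG : ∀ p q, p ∉ S → q ∉ S → G.Adj p q → G'.Adj p q)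
    (hcc : ∀ p, p ∉ S → c' p = c p)
    (h1 : ∀ s ∈ S, ∀ p, G.Adj s p → c' s = 0 ∨ c' p = 0 ∨ c' s = c' p)
    (h2 : ∀ s ∈ S, c' s = 0 → ∀ p q, c' p = 0 → c' q = 0 → G.Adj s p → G.Adj s q → p = q) :
    Good G c' := by
  constructor
  · intro p q hpq
    by_cases hp : p ∈ S
    · exact h1 p hp q hpq
    by_cases hq : q ∈ S
    · have := h1 q hq p hpq.symm
      grind
    rw [hcc p hp, hcc q hq]
    exact hc.side p q (hG p q hp hq hpq)
  · intro W hW hW0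
    by_cases hWS : ∃ s ∈ S, s ∈ W
    · obtain ⟨s, hs, hsW⟩ := hWS
      exact ⟨s, hsW, fun p hp q hq => h2 s hs (hW0 s hsW) p q (hW0 p hp) (hW0 q hq)⟩
    · have hn : ∀ w ∈ W, w ∉ S := fun w hw hwS => hWS ⟨w, hwS, hw⟩
      obtain ⟨w, hw, H⟩ := hc.forest W hW fun w hw => (hcc w (hn w hw)).symm.trans (hW0 w hw)
      exact ⟨w, hw, fun p hp q hq hwp hwq =>
        H p hp q hq (hG w p (hn w hw) (hn p hp) hwp) (hG w q (hn w hw) (hn q hq) hwq)⟩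

/-- The reduction principle: a minimal counterexample has no reducible set `S`, that is, no graph
`G'` on `A \ S` with at least `19|S|/8` edges fewer than `G` such that each forest cut of `G'`
extends to one of `G`. -/
theorem Ctx.reduce {A : Finset V} {G : SimpleGraph V} (X : Ctx A G) (G' : SimpleGraph V)
    (S : Finset V) (hSA : S ⊆ A) (hS : 0 < S.card) (hcard : 4 + S.card ≤ A.card)
    (hG' : ∀ p q, G'.Adj p q → p ∈ A ∧ p ∉ S)
    (hedges : 8 * ec G' + 19 * S.card ≤ 8 * ec G)
    (hext : ∀ c, Good G' c → ∃ c', (∀ p, p ∉ S → c' p = c p) ∧ Good G c') : False := by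
  classical
  have hcs := Finset.card_sdiff_add_card_eq_card hSA
  have hf := X.few
  obtain ⟨c, hc, p, hp, q, hq, h⟩ := X.ih (A \ S) G' (by omega) (by omega)
    (fun p q h => by simpa using hG' p q h) (by omega)
  obtain ⟨c', hcc, hc'⟩ := hext c hc
  simp only [Finset.mem_sdiff] at hp hq
  refine X.nocut ⟨c', hc', p, hp.1, q, hq.1, ?_⟩
  rwa [hcc p hp.2, hcc q hq.2]

/-- In a minimal counterexample, a set `B` that contains all outer neighbours of `S` does not induce
a forest, unless `S ∪ B` is everything. -/
theorem Ctx.nbr_not_forest {A : Finset V} {G : SimpleGraph V} (X : Ctx A G) (S B : Finset V)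
    (hSA : S ⊆ A) (hS : S.Nonempty) (hcard : S.card + B.card < A.card)
    (hN : ∀ s ∈ S, ∀ p, G.Adj s p → p ∈ S ∨ p ∈ B)
    (hB : Forest G (fun v => v ∈ B)) : False := by
  classical
  obtain ⟨s, hs⟩ := hS
  obtain ⟨t, ht, htn⟩ : ∃ t ∈ A, t ∉ S ∪ B := by
    by_contra! h
    have := Finset.card_le_card (show A ⊆ S ∪ B from h)
    have := Finset.card_union_le S B
    omega
  simp only [Finset.mem_union, not_or] at htn
  -- `B` separates `S` from the vertices outside `S ∪ B`, such as `t`.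
  refine X.nocut ⟨fun v => if v ∈ S then 1 else if v ∈ B then 0 else 2, ⟨?_, ?_⟩,
    s, hSA hs, t, ht, ?_⟩
  · intro p q hpq
    have h1 := hN p
    have h2 := hN q
    have h3 := hpq.symm
    grind
  · exact hB.mono (by grind)
  · grind

/-! ### Edge counts -/

theorem ec_sup_edge [Finite V] (G : SimpleGraph V) (x y : V) : ec (G ⊔ edge x y) ≤ ec G + 1 := by
  unfold ec
  have h : (G ⊔ edge x y).edgeSet ⊆ insert s(x, y) G.edgeSet := by
    intro e
    induction e with
    | h p q =>
      simp only [mem_edgeSet, sup_adj, edge_adj, Set.mem_insert_iff, Sym2.eq_iff]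
      tauto
  exact (Set.ncard_le_ncard h (Set.toFinite _)).trans (Set.ncard_insert_le _ _)

theorem ec_delete [Finite V] (G : SimpleGraph V) (v : V) (T : Finset V)
    (hT : ∀ t ∈ T, G.Adj v t) : ec (G.deleteIncidenceSet v) + T.card ≤ ec G := by
  classical
  unfold ec
  have hinj : Set.InjOn (fun t => s(v, t)) (T : Set V) := by
    intro a _ b _ h
    simp only [Sym2.eq_iff] at h
    grind
  have h1 : ((fun t => s(v, t)) '' (T : Set V)).ncard = T.card := by
    rw [hinj.ncard_image, Set.ncard_coe_finset]
  rw [← h1, ← Set.ncard_union_eq _ (Set.toFinite _) (Set.toFinite _)]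
  · apply Set.ncard_le_ncard _ (Set.toFinite _)
    rintro e (he | ⟨t, ht, rfl⟩)
    · exact edgeSet_mono (G.deleteIncidenceSet_le v) he
    · exact hT t ht
  · rw [Set.disjoint_left]
    rintro e he ⟨t, ht, rfl⟩
    simp [deleteIncidenceSet_adj] at he

theorem sum_degree_eq [Fintype V] [DecidableEq V] (G : SimpleGraph V) [DecidableRel G.Adj] :
    ∑ v, G.degree v = 2 * ec G := by
  rw [G.sum_degrees_eq_twice_card_edges, ec, ← coe_edgeFinset, Set.ncard_coe_finset]

theorem forest_of_card_le_two (G : SimpleGraph V) (B : Finset V) (hB : B.card ≤ 2) :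
    Forest G (fun v => v ∈ B) := by
  classical
  rintro W ⟨w, hw⟩ hWB
  refine ⟨w, hw, fun p hp q hq hwp hwq => ?_⟩
  by_contra hpq
  have h3 : ({w, p, q} : Finset V).card = 3 :=
    Finset.card_eq_three.mpr ⟨w, p, q, hwp.ne, hwq.ne, hpq, rfl⟩
  have : ({w, p, q} : Finset V) ⊆ B := by
    intro x hx
    simp only [Finset.mem_insert, Finset.mem_singleton] at hx
    rcases hx with rfl | rfl | rfl <;> exact hWB _ ‹_›
  have := Finset.card_le_card this
  omega

/-- A triangle lies in the cut together with one side `s`. -/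
theorem exists_side_three {x y z : ℕ} (hxy : x = 0 ∨ y = 0 ∨ x = y) (hxz : x = 0 ∨ z = 0 ∨ x = z)
    (hyz : y = 0 ∨ z = 0 ∨ y = z) :
    ∃ s, s ≠ 0 ∧ (x = 0 ∨ x = s) ∧ (y = 0 ∨ y = s) ∧ (z = 0 ∨ z = s) := by
  by_cases hx : x = 0
  · by_cases hy : y = 0
    · by_cases hz : z = 0
      · exact ⟨1, by grind⟩
      · exact ⟨z, by grind⟩
    · exact ⟨y, by grind⟩
  · exact ⟨x, by grind⟩

/-- A complete graph on four vertices lies in the cut together with one side `s`. -/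
theorem exists_side_four {x y z w : ℕ} (hxy : x = 0 ∨ y = 0 ∨ x = y)
    (hxz : x = 0 ∨ z = 0 ∨ x = z) (hyz : y = 0 ∨ z = 0 ∨ y = z) (hxw : x = 0 ∨ w = 0 ∨ x = w)
    (hyw : y = 0 ∨ w = 0 ∨ y = w) (hzw : z = 0 ∨ w = 0 ∨ z = w) :
    ∃ s, s ≠ 0 ∧ (x = 0 ∨ x = s) ∧ (y = 0 ∨ y = s) ∧ (z = 0 ∨ z = s) ∧ (w = 0 ∨ w = s) := by
  by_cases hw : w = 0
  · obtain ⟨s, hs⟩ := exists_side_three hxy hxz hyz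
    exact ⟨s, by grind⟩
  · exact ⟨w, by grind⟩

/-- `v` has the four neighbours `a, b, c, d`, where `abc` is a triangle and `d` is adjacent to at
most one of `a, b, c`. So `v, a, b, c` form a `K₄` with `v` of degree four; `a, b, c` are the mates
of `v`. -/
structure Str (G : SimpleGraph V) (v a b c d : V) : Prop where
  nb : ∀ p, G.Adj v p ↔ p = a ∨ p = b ∨ p = c ∨ p = d
  ad : a ≠ d
  bd : b ≠ d
  cd : c ≠ d
  ab : G.Adj a b
  ac : G.Adj a c
  bc : G.Adj b c
  nab : ¬ (G.Adj a d ∧ G.Adj b d)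
  nac : ¬ (G.Adj a d ∧ G.Adj c d)
  nbc : ¬ (G.Adj b d ∧ G.Adj c d)

theorem Str.rot {v a b c d : V} (h : Str G v a b c d) : Str G v b c a d where
  nb := by have := h.nb; grind
  ad := h.bd
  bd := h.cd
  cd := h.ad
  ab := h.bc
  ac := h.ab.symm
  bc := h.ac.symm
  nab := h.nbc
  nac := by have := h.nab; tauto
  nbc := by have := h.nac; tauto

theorem Str.swap {v a b c d : V} (h : Str G v a b c d) : Str G v a c b d where
  nb := by have := h.nb; grind
  ad := h.ad
  bd := h.cd
  cd := h.bd
  ab := h.ac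
  ac := h.ab
  bc := h.bc.symm
  nab := h.nac
  nac := h.nab
  nbc := by have := h.nbc; tauto

/-! ### Vertices of degree at most four -/

variable [Fintype V] {A : Finset V} {G : SimpleGraph V}

theorem Ctx.three_le_degree [DecidableRel G.Adj] (X : Ctx A G) {v : V} (hv : v ∈ A) :
    3 ≤ G.degree v := by
  by_contra! h
  have := X.four
  rw [← G.card_neighborFinset_eq_degree] at h
  exact X.nbr_not_forest {v} (G.neighborFinset v) (by simpa using hv) (by simp)
    (by rw [Finset.card_singleton]; omega) (by simp +contextual)
    (forest_of_card_le_two _ _ (by omega))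

variable [DecidableEq V]

/-- A vertex of degree three has a triangle as its neighbourhood, and can then simply be deleted. -/
theorem Ctx.four_le_degree [DecidableRel G.Adj] (X : Ctx A G) (h5 : 5 ≤ A.card) {v : V}
    (hv : v ∈ A) : 4 ≤ G.degree v := by
  by_contra! h
  have := X.three_le_degree hv
  have hd : G.degree v = 3 := by omega
  rw [← G.card_neighborFinset_eq_degree] at hd
  obtain ⟨x, y, z, hxy, hxz, hyz, hN⟩ := Finset.card_eq_three.mp hd
  have hN' : ∀ p, G.Adj v p ↔ p = x ∨ p = y ∨ p = z := by
    intro p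
    rw [← mem_neighborFinset, hN]
    simp
  by_cases ht : G.Adj x y ∧ G.Adj x z ∧ G.Adj y z
  · refine X.reduce (G.deleteIncidenceSet v) {v} (by simpa using hv) (by simp) (by simp; omega)
      ?_ ?_ ?_
    · intro p q h
      rw [deleteIncidenceSet_adj] at h
      exact ⟨X.sub p q h.1, by simpa using h.2.1⟩
    · have := ec_delete G v (G.neighborFinset v) (by simp)
      simp only [Finset.card_singleton]
      omega
    · intro c hc
      have hs := hc.side
      simp only [deleteIncidenceSet_adj] at hs
      have nx := ((hN' x).2 (by simp)).ne
      have ny := ((hN' y).2 (by simp)).ne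
      have nz := ((hN' z).2 (by simp)).ne
      obtain ⟨s, hs0, hs1, hs2, hs3⟩ := exists_side_three (hs x y ⟨ht.1, nx.symm, ny.symm⟩)
        (hs x z ⟨ht.2.1, nx.symm, nz.symm⟩) (hs y z ⟨ht.2.2, ny.symm, nz.symm⟩)
      refine ⟨fun p => if p = v then s else c p, by grind, hc.extend (S := {v}) ?_ ?_ ?_ ?_⟩
      · simp only [deleteIncidenceSet_adj]
        grind
      · grind
      · grind
      · grind
  · refine X.nbr_not_forest {v} (G.neighborFinset v) (by simpa using hv) (by simp)
      (by simp only [Finset.card_singleton]; omega) (by simp +contextual) ?_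
    rw [hN]
    exact (forest_three G x y z ht).mono (by simp)

/-- With minimum degree at least four, `2|A| ≤ |E| < (19|A| - 28)/8` forces `|A| > 28/3`. The case
`|A| = 4`, where the minimum degree is at least three, does not occur. -/
theorem Ctx.ten_le_card (X : Ctx A G) : 10 ≤ A.card := by
  classical
  have h4 := X.four
  have hf := X.few
  have hsum : ∑ v ∈ A, G.degree v ≤ 2 * ec G := by
    rw [← sum_degree_eq]
    exact Finset.sum_le_univ_sum_of_nonneg (by simp)
  by_cases h5 : 5 ≤ A.card
  · have := Finset.card_nsmul_le_sum A (fun v => G.degree v) 4 fun v hv => X.four_le_degree h5 hv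
    simp only [smul_eq_mul] at this
    omega
  · have := Finset.card_nsmul_le_sum A (fun v => G.degree v) 3 fun v hv => X.three_le_degree hv
    simp only [smul_eq_mul] at this
    omega

theorem exists_nbrs_four [DecidableRel G.Adj] {v : V} (h : G.degree v = 4) :
    ∃ a b c d, a ≠ b ∧ a ≠ c ∧ a ≠ d ∧ b ≠ c ∧ b ≠ d ∧ c ≠ d ∧
      ∀ p, G.Adj v p ↔ p = a ∨ p = b ∨ p = c ∨ p = d := by
  rw [← G.card_neighborFinset_eq_degree] at h
  obtain ⟨a, t, hat, hN, ht⟩ := Finset.card_eq_succ.mp h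
  obtain ⟨b, c, d, hbc, hbd, hcd, rfl⟩ := Finset.card_eq_three.mp ht
  simp only [Finset.mem_insert, Finset.mem_singleton, not_or] at hat
  refine ⟨a, b, c, d, hat.1, hat.2.1, hat.2.2, hbc, hbd, hcd, fun p => ?_⟩
  rw [← mem_neighborFinset, ← hN]
  simp

/-- The neighbourhood of a vertex `v` of degree four does not contain `K₄` minus the edge `cd`:
otherwise delete `v` and add the edge `cd`. The four neighbours now form a `K₄`, so they leave
room for `v` on one side of every cut. -/
theorem Ctx.no_diamond (X : Ctx A G) {v a b c d : V} (hab : a ≠ b) (hac : a ≠ c) (had : a ≠ d)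
    (hbc : b ≠ c) (hbd : b ≠ d) (hcd : c ≠ d)
    (hN : ∀ p, G.Adj v p ↔ p = a ∨ p = b ∨ p = c ∨ p = d)
    (h1 : G.Adj a b) (h2 : G.Adj a c) (h3 : G.Adj b c) (h4 : G.Adj a d) (h5 : G.Adj b d) :
    False := by
  have h10 := X.ten_le_card
  have va := (hN a).2 (by simp)
  have vb := (hN b).2 (by simp)
  have vc := (hN c).2 (by simp)
  have vd := (hN d).2 (by simp)
  have hvA := X.sub _ _ va
  have hcA := X.sub _ _ vc.symm
  have hdA := X.sub _ _ vd.symm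
  have na := va.ne
  have nb := vb.ne
  have nc := vc.ne
  have nd := vd.ne
  refine X.reduce (G.deleteIncidenceSet v ⊔ edge c d) {v} (by simpa using hvA) (by simp)
    (by simp; omega) ?_ ?_ ?_
  · intro p q h
    simp only [sup_adj, deleteIncidenceSet_adj, edge_adj] at h
    have := X.sub p q
    grind
  · have e1 := ec_delete G v {a, b, c, d} (by simp [hN])
    have e2 := ec_sup_edge (G.deleteIncidenceSet v) c d
    have e3 : ({a, b, c, d} : Finset V).card = 4 := by grind
    simp only [Finset.card_singleton]
    omega
  · intro f hc
    have hs := hc.side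
    simp only [sup_adj, deleteIncidenceSet_adj, edge_adj] at hs
    obtain ⟨s, hs0, hs1, hs2, hs3, hs4⟩ := exists_side_four (hs a b (by grind))
      (hs a c (by grind)) (hs b c (by grind)) (hs a d (by grind)) (hs b d (by grind))
      (hs c d (by grind))
    refine ⟨fun p => if p = v then s else f p, by grind, hc.extend (S := {v}) ?_ ?_ ?_ ?_⟩
    · simp only [sup_adj, deleteIncidenceSet_adj]
      grind
    · grind
    · grind
    · grind

/-- The neighbourhood of a vertex `v` of degree four does not contain a 4-cycle `abcd`. By
`Ctx.no_diamond` the edge `ac` is absent; delete `v` and add `ac`. A forest cut that separates two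
neighbours of `v` separates `b` from `d` and contains `a` and `c`; then `v` can join the cut, where
it subdivides the edge `ac`. -/
theorem Ctx.no_square (X : Ctx A G) {v a b c d : V} (hab : a ≠ b) (hac : a ≠ c) (had : a ≠ d)
    (hbc : b ≠ c) (hbd : b ≠ d) (hcd : c ≠ d)
    (hN : ∀ p, G.Adj v p ↔ p = a ∨ p = b ∨ p = c ∨ p = d)
    (h1 : G.Adj a b) (h2 : G.Adj b c) (h3 : G.Adj c d) (h4 : G.Adj d a) : False := by
  have h10 := X.ten_le_card
  by_cases h5 : G.Adj a c
  · exact X.no_diamond (v := v) hac hab had hbc.symm hcd hbd (by grind) h5 h1 h2.symm h4.symm h3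
  have va := (hN a).2 (by simp)
  have vb := (hN b).2 (by simp)
  have vc := (hN c).2 (by simp)
  have vd := (hN d).2 (by simp)
  have hvA := X.sub _ _ va
  have hcA := X.sub _ _ vc.symm
  have haA := X.sub _ _ va.symm
  have na := va.ne
  have nb := vb.ne
  have nc := vc.ne
  have nd := vd.ne
  refine X.reduce (G.deleteIncidenceSet v ⊔ edge a c) {v} (by simpa using hvA) (by simp)
    (by simp; omega) ?_ ?_ ?_
  · intro p q h
    simp only [sup_adj, deleteIncidenceSet_adj, edge_adj] at h
    have := X.sub p q
    grind
  · have e1 := ec_delete G v {a, b, c, d} (by simp [hN])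
    have e2 := ec_sup_edge (G.deleteIncidenceSet v) a c
    have e3 : ({a, b, c, d} : Finset V).card = 4 := by grind
    simp only [Finset.card_singleton]
    omega
  · intro f hc
    have hs := hc.side
    have hF := hc.forest
    simp only [sup_adj, deleteIncidenceSet_adj, edge_adj] at hs
    by_cases hsp : ∃ s, s ≠ 0 ∧ (f a = 0 ∨ f a = s) ∧ (f b = 0 ∨ f b = s) ∧ (f c = 0 ∨ f c = s) ∧
        (f d = 0 ∨ f d = s)
    · obtain ⟨s, hs0, hs1, hs2, hs3, hs4⟩ := hsp
      refine ⟨fun p => if p = v then s else f p, by grind, hc.extend (S := {v}) ?_ ?_ ?_ ?_⟩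
      · simp only [sup_adj, deleteIncidenceSet_adj]
        grind
      · grind
      · grind
      · grind
    · have fb : f b ≠ 0 := by
        intro fb
        obtain ⟨s, hs⟩ := exists_side_three (hs a c (by grind)) (hs a d (by grind [G.adj_comm]))
          (hs c d (by grind))
        exact hsp ⟨s, by grind⟩
      have fd : f d ≠ 0 := by
        intro fd
        obtain ⟨s, hs⟩ := exists_side_three (hs a b (by grind)) (hs a c (by grind))
          (hs b c (by grind))
        exact hsp ⟨s, by grind⟩
      have fbd : f b ≠ f d := by
        intro fbd
        have q1 := hs a b (by grind)
        have q2 := hs c b (by grind [G.adj_comm])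
        exact hsp ⟨f b, by grind⟩
      have fa : f a = 0 := by
        have q1 := hs a b (by grind)
        have q2 := hs a d (by grind [G.adj_comm])
        grind
      have fc : f c = 0 := by
        have q1 := hs c b (by grind [G.adj_comm])
        have q2 := hs c d (by grind)
        grind
      refine ⟨fun p => if p = v then 0 else f p, by grind, ?_, ?_⟩
      · intro p q hpq
        by_cases hp : p = v
        · simp [hp]
        by_cases hq : q = v
        · simp [hq]
        simpa [hp, hq] using hs p q (by grind)
      · intro W hW hW0
        -- If `W` contains `v`, `a` and `c`, a suitable vertex of `W \ {v}` still works in `W`,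
        -- because the neighbour `v` takes the place of the neighbour joined by the edge `ac`.
        by_cases hvW : v ∈ W ∧ a ∈ W ∧ c ∈ W
        · obtain ⟨w, hw, H⟩ := hF (W.erase v) ⟨a, by grind⟩ (by grind)
          simp only [sup_adj, deleteIncidenceSet_adj, edge_adj] at H
          have hwW : w ∈ W := by grind
          refine ⟨w, hwW, fun p hp q hq hwp hwq => ?_⟩
          have hv1 := hN w
          have hv2 := hN p
          have hv3 := hN q
          have hv4 := hW0 w hwW
          have s1 := G.adj_comm v w
          have s2 := G.adj_comm a c
          have H1 := H p
          have H2 := H a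
          have H3 := H c
          grind
        · by_cases hvW' : v ∈ W
          · refine ⟨v, hvW', fun p hp q hq hwp hwq => ?_⟩
            have := hW0 p hp
            have := hW0 q hq
            grind
          · obtain ⟨w, hw, H⟩ := hF W hW (by
              intro w hw
              have := hW0 w hw
              grind)
            simp only [sup_adj, deleteIncidenceSet_adj, edge_adj] at H
            exact ⟨w, hw, fun p hp q hq hwp hwq => H p hp q hq (by grind) (by grind)⟩

theorem Ctx.str_of_triangle (X : Ctx A G) {v a b c d : V} (had : a ≠ d) (hbd : b ≠ d) (hcd : c ≠ d)
    (hN : ∀ p, G.Adj v p ↔ p = a ∨ p = b ∨ p = c ∨ p = d)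
    (h1 : G.Adj a b) (h2 : G.Adj a c) (h3 : G.Adj b c) : Str G v a b c d := by
  have hab := h1.ne
  have hac := h2.ne
  have hbc := h3.ne
  refine ⟨hN, had, hbd, hcd, h1, h2, h3, ?_, ?_, ?_⟩
  · rintro ⟨k1, k2⟩
    exact X.no_diamond (v := v) hab hac had hbc hbd hcd hN h1 h2 h3 k1 k2
  · rintro ⟨k1, k2⟩
    exact X.no_diamond (v := v) hac hab had hbc.symm hcd hbd (by grind) h2 h1 h3.symm k1 k2
  · rintro ⟨k1, k2⟩
    exact X.no_diamond (v := v) hbc hab.symm hbd hac.symm hcd had (by grind) h3 h1.symm h2.symm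
      k1 k2

/-- The neighbourhood of a vertex of degree four is not a forest and contains no 4-cycle, hence
contains a triangle. -/
theorem Ctx.exists_str [DecidableRel G.Adj] (X : Ctx A G) {v : V} (h : G.degree v = 4) :
    ∃ a b c d, Str G v a b c d := by
  have h10 := X.ten_le_card
  obtain ⟨a, b, c, d, hab, hac, had, hbc, hbd, hcd, hN⟩ := exists_nbrs_four h
  by_cases t1 : G.Adj a b ∧ G.Adj a c ∧ G.Adj b c
  · exact ⟨a, b, c, d, X.str_of_triangle (v := v) had hbd hcd hN t1.1 t1.2.1 t1.2.2⟩
  by_cases t2 : G.Adj a b ∧ G.Adj a d ∧ G.Adj b d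
  · exact ⟨a, b, d, c, X.str_of_triangle (v := v) hac hbc hcd.symm (by grind) t2.1 t2.2.1 t2.2.2⟩
  by_cases t3 : G.Adj a c ∧ G.Adj a d ∧ G.Adj c d
  · exact ⟨a, c, d, b, X.str_of_triangle (v := v) hab hbc.symm hbd.symm (by grind) t3.1
      t3.2.1 t3.2.2⟩
  by_cases t4 : G.Adj b c ∧ G.Adj b d ∧ G.Adj c d
  · exact ⟨b, c, d, a, X.str_of_triangle (v := v) hab.symm hac.symm had.symm (by grind)
      t4.1 t4.2.1 t4.2.2⟩
  exfalso
  have hvA := X.sub _ _ ((hN a).2 (by simp))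
  have hcard : ({a, b, c, d} : Finset V).card = 4 := by grind
  refine X.nbr_not_forest {v} {a, b, c, d} (by simpa using hvA) (by simp)
    (by simp only [Finset.card_singleton]; omega) (by simp [hN]) ?_
  refine (forest_four G a b c d t1 t2 t3 t4 ?_ ?_ ?_).mono (by simp)
  · rintro ⟨k1, k2, k3, k4⟩
    exact X.no_square (v := v) hab hac had hbc hbd hcd hN k1 k2 k3 k4
  · rintro ⟨k1, k2, k3, k4⟩
    exact X.no_square (v := v) hab had hac hbd hbc hcd.symm (by grind) k1 k2 k3 k4
  · rintro ⟨k1, k2, k3, k4⟩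
    exact X.no_square (v := v) hac hab had hbc.symm hcd hbd (by grind) k1 k2 k3 k4

theorem exists_last_nbr [DecidableRel G.Adj] {v : V} {T : Finset V} (hT : ∀ t ∈ T, G.Adj v t)
    (h : G.degree v = T.card + 1) : ∃ z, z ∉ T ∧ ∀ p, G.Adj v p ↔ p = z ∨ p ∈ T := by
  have hsub : T ⊆ G.neighborFinset v := fun t ht => by simpa using hT t ht
  have hc := Finset.card_sdiff_add_card_eq_card hsub
  rw [G.card_neighborFinset_eq_degree] at hc
  obtain ⟨z, hz⟩ := Finset.card_eq_one.mp (show (G.neighborFinset v \ T).card = 1 by omega)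
  have key : ∀ p, p ∈ G.neighborFinset v \ T ↔ p = z := by simp [hz]
  simp only [Finset.mem_sdiff, mem_neighborFinset] at key
  exact ⟨z, ((key z).2 rfl).2, by grind⟩

theorem Str.degree [DecidableRel G.Adj] {v a b c d : V} (h : Str G v a b c d) :
    G.degree v = 4 := by
  have h1 : G.neighborFinset v = {a, b, c, d} := by
    ext p
    simp [h.nb]
  have := h.ab.ne
  have := h.ac.ne
  have := h.bc.ne
  have := h.ad
  have := h.bd
  have := h.cd
  rw [← G.card_neighborFinset_eq_degree, h1]
  grind

/-- A mate `a` of a vertex `v` of degree four does not have degree four itself. Otherwise `b, c`,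
the fourth neighbour `d` of `v` and that of `a`, called `e`, surround `{v, a}`. As they do not
induce a forest, `d` differs from `e` and is adjacent to `e`, and each of `d, e` is adjacent to
exactly one of `b, c`; then delete `v` and `a` and complete `b, c, d, e` to a `K₄` with two edges.
-/
theorem Ctx.mate_degree_ne_four [DecidableRel G.Adj] (X : Ctx A G) {v a b c d : V}
    (h : Str G v a b c d) (ha : G.degree a = 4) : False := by
  have h10 := X.ten_le_card
  have va := (h.nb a).2 (by simp)
  have vb := (h.nb b).2 (by simp)
  have vc := (h.nb c).2 (by simp)
  have vd := (h.nb d).2 (by simp)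
  have nab := h.ab.ne
  have nac := h.ac.ne
  have nbc := h.bc.ne
  have nad := h.ad
  have nbd := h.bd
  have ncd := h.cd
  have na := va.ne
  have nb := vb.ne
  have nc := vc.ne
  have nd := vd.ne
  have hvA := X.sub _ _ va
  have haA := X.sub _ _ va.symm
  have hbA := X.sub _ _ vb.symm
  have hcA := X.sub _ _ vc.symm
  have hdA := X.sub _ _ vd.symm
  obtain ⟨e, heT, hN⟩ := exists_last_nbr (G := G) (v := a) (T := {v, b, c})
    (by simp [va.symm, h.ab, h.ac]) (by rw [ha]; grind)
  simp only [Finset.mem_insert, Finset.mem_singleton, not_or] at heT hN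
  have ae := (hN e).2 (by simp)
  have nae := ae.ne
  have heA := X.sub _ _ ae.symm
  have h' : Str G a v b c e :=
    X.str_of_triangle (Ne.symm heT.1) (Ne.symm heT.2.1) (Ne.symm heT.2.2) (by grind) vb vc h.bc
  have hnbc := h.nbc
  have hnbc' := h'.nbc
  have hvN := h.nb
  have hS : ({v, a} : Finset V).card = 2 := by grind
  have hSA : ({v, a} : Finset V) ⊆ A := by grind
  by_cases hde : d = e
  · subst hde
    have hB : ({b, c, d} : Finset V).card = 3 := by grind
    refine X.nbr_not_forest {v, a} {b, c, d} hSA (by simp) (by omega) (by grind) ?_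
    exact (forest_three G b c d fun k => hnbc ⟨k.2.1, k.2.2⟩).mono (by simp)
  have hB : ({b, c, d, e} : Finset V).card = 4 := by grind
  by_cases hC : G.Adj d e ∧ (G.Adj d b ∨ G.Adj d c) ∧ (G.Adj e b ∨ G.Adj e c)
  · obtain ⟨hde', h1, h2⟩ := hC
    -- The edges `yd` and `y'e` are those missing from a `K₄` on `b, c, d, e`.
    obtain ⟨y, hyA, hy⟩ : ∃ y, y ∈ A ∧ ∀ z, (z = b ∨ z = c) → G.Adj d z ∨ z = y := by
      rcases h1 with h1 | h1
      · exact ⟨c, hcA, by grind⟩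
      · exact ⟨b, hbA, by grind⟩
    obtain ⟨y', hyA', hy'⟩ : ∃ y, y ∈ A ∧ ∀ z, (z = b ∨ z = c) → G.Adj e z ∨ z = y := by
      rcases h2 with h2 | h2
      · exact ⟨c, hcA, by grind⟩
      · exact ⟨b, hbA, by grind⟩
    refine X.reduce (((G ⊔ edge y d ⊔ edge y' e).deleteIncidenceSet v).deleteIncidenceSet a)
      {v, a} hSA (by omega) (by omega) ?_ ?_ ?_
    · intro p q hpq
      simp only [sup_adj, deleteIncidenceSet_adj, edge_adj] at hpq
      have := X.sub p q
      grind
    · have e1 := ec_delete ((G ⊔ edge y d ⊔ edge y' e).deleteIncidenceSet v) a {b, c, e} (by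
        simp only [sup_adj, deleteIncidenceSet_adj, edge_adj]
        grind)
      have e2 := ec_delete (G ⊔ edge y d ⊔ edge y' e) v {a, b, c, d} (by
        simp only [sup_adj, edge_adj]
        grind)
      have e3 := ec_sup_edge (G ⊔ edge y d) y' e
      have e4 := ec_sup_edge G y d
      have e5 : ({a, b, c, d} : Finset V).card = 4 := by grind
      have e6 : ({b, c, e} : Finset V).card = 3 := by grind
      omega
    · intro f hf
      have hs := hf.side
      simp only [sup_adj, deleteIncidenceSet_adj, edge_adj] at hs
      have hbc' := h.bc
      have q1 := hy b (by simp)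
      have q2 := hy c (by simp)
      have q3 := hy' b (by simp)
      have q4 := hy' c (by simp)
      have s1 := G.adj_comm b d
      have s2 := G.adj_comm c d
      have s3 := G.adj_comm b e
      have s4 := G.adj_comm c e
      obtain ⟨s, hs0, hs1, hs2, hs3, hs4⟩ := exists_side_four (hs b c (by grind))
        (hs b d (by grind)) (hs c d (by grind)) (hs b e (by grind)) (hs c e (by grind))
        (hs d e (by grind))
      refine ⟨fun p => if p = v then s else if p = a then s else f p, by grind,
        hf.extend (S := {v, a}) ?_ ?_ ?_ ?_⟩
      · simp only [sup_adj, deleteIncidenceSet_adj]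
        grind
      · grind
      · clear hs hf s1 s2 s3 s4 q1 q2 q3 q4 hy hy'
        grind
      · grind
  · refine X.nbr_not_forest {v, a} {b, c, d, e} hSA (by simp) (by omega) ?_ ?_
    · intro s hs p hp
      simp only [Finset.mem_insert, Finset.mem_singleton] at hs ⊢
      rcases hs with rfl | rfl
      · rcases (hvN p).1 hp with h | h | h | h <;> simp [h]
      · rcases (hN p).1 hp with h | h | h | h <;> simp [h]
    exact (forest_four_of hnbc hnbc' hC).mono (by simp)

/-! ### Vertices of degree five -/

/-- The reduction principle for deleting three vertices `a, u, v` that meet at least eleven edges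
and adding three edges: at least eight edges are lost, and `8 · 8 ≥ 19 · 3`. The set `Ta` lists
neighbours of `a`, while `Tu` and `Tv` list neighbours of `u` and `v` not counted before. The
hypothesis `hext` records what the extension of a labelling `c` uses about the new graph: `c`
respects its edges, and no triangle lies in the cut. -/
theorem Ctx.reduce_three (X : Ctx A G) {a u v p₁ q₁ p₂ q₂ p₃ q₃ : V} (Ta Tu Tv : Finset V)
    (ha : a ∈ A) (hu : u ∈ A) (hv : v ∈ A) (hau : a ≠ u) (hav : a ≠ v) (huv : u ≠ v)
    (hTa : ∀ t ∈ Ta, G.Adj a t) (hTu : ∀ t ∈ Tu, G.Adj u t ∧ t ≠ a)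
    (hTv : ∀ t ∈ Tv, G.Adj v t ∧ t ≠ a ∧ t ≠ u)
    (ca : Ta.card = 5) (cu : Tu.card = 3) (cv : Tv.card = 3)
    (m₁ : p₁ ∈ A) (n₁ : q₁ ∈ A) (m₂ : p₂ ∈ A) (n₂ : q₂ ∈ A) (m₃ : p₃ ∈ A) (n₃ : q₃ ∈ A)
    (hext : ∀ c : V → ℕ,
      (∀ p q, p ≠ a ∧ p ≠ u ∧ p ≠ v → q ≠ a ∧ q ≠ u ∧ q ≠ v →
        (G ⊔ edge p₁ q₁ ⊔ edge p₂ q₂ ⊔ edge p₃ q₃).Adj p q → c p = 0 ∨ c q = 0 ∨ c p = c q) →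
      (∀ p q r, p ≠ a ∧ p ≠ u ∧ p ≠ v → q ≠ a ∧ q ≠ u ∧ q ≠ v → r ≠ a ∧ r ≠ u ∧ r ≠ v →
        (G ⊔ edge p₁ q₁ ⊔ edge p₂ q₂ ⊔ edge p₃ q₃).Adj p q →
        (G ⊔ edge p₁ q₁ ⊔ edge p₂ q₂ ⊔ edge p₃ q₃).Adj p r →
        (G ⊔ edge p₁ q₁ ⊔ edge p₂ q₂ ⊔ edge p₃ q₃).Adj q r →
        c p = 0 → c q = 0 → c r = 0 → False) →
      ∃ c' : V → ℕ, (∀ p, p ≠ a ∧ p ≠ u ∧ p ≠ v → c' p = c p) ∧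
        (∀ s, s = a ∨ s = u ∨ s = v → ∀ p, G.Adj s p → c' s = 0 ∨ c' p = 0 ∨ c' s = c' p) ∧
        (∀ s, s = a ∨ s = u ∨ s = v → c' s = 0 →
          ∀ p q, c' p = 0 → c' q = 0 → G.Adj s p → G.Adj s q → p = q)) : False := by
  have h10 := X.ten_le_card
  have hS : ({a, u, v} : Finset V).card = 3 := by grind
  set H := G ⊔ edge p₁ q₁ ⊔ edge p₂ q₂ ⊔ edge p₃ q₃ with hH
  have hGH : ∀ p q, G.Adj p q → H.Adj p q := fun p q h => by simp [hH, h]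
  refine X.reduce (((H.deleteIncidenceSet a).deleteIncidenceSet u).deleteIncidenceSet v)
    {a, u, v} (by grind) (by omega) (by omega) ?_ ?_ ?_
  · intro p q h
    simp only [hH, sup_adj, deleteIncidenceSet_adj, edge_adj] at h
    have := X.sub p q
    grind
  · have e1 := ec_delete ((H.deleteIncidenceSet a).deleteIncidenceSet u) v Tv (by
      simp only [deleteIncidenceSet_adj]
      grind)
    have e2 := ec_delete (H.deleteIncidenceSet a) u Tu (by
      simp only [deleteIncidenceSet_adj]
      grind)
    have e3 := ec_delete H a Ta (by grind)
    have e4 := ec_sup_edge (G ⊔ edge p₁ q₁ ⊔ edge p₂ q₂) p₃ q₃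
    have e5 := ec_sup_edge (G ⊔ edge p₁ q₁) p₂ q₂
    have e6 := ec_sup_edge G p₁ q₁
    rw [← hH] at e4
    omega
  · intro c hc
    have hs := hc.side
    simp only [deleteIncidenceSet_adj] at hs
    obtain ⟨c', k1, k2, k3⟩ := hext c (fun p q hp hq h => hs p q (by grind))
      (fun p q r hp hq hr h1 h2 h3 cp cq cr => hc.forest.no_triangle cp cq cr
        (by simp only [deleteIncidenceSet_adj]; grind)
        (by simp only [deleteIncidenceSet_adj]; grind)
        (by simp only [deleteIncidenceSet_adj]; grind))
    refine ⟨c', by grind, hc.extend (S := {a, u, v}) ?_ (by grind) (by grind) (by grind)⟩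
    simp only [deleteIncidenceSet_adj]
    grind

/-- Let `u` and `v` be vertices of degree four, both with mates `a, x, y`, where `a` has degree five
with fifth neighbour `z`. Then no three added edges make `xyz` a triangle and `z` equal or adjacent
to each of `du`, `dv`. Indeed, take a cut of the reduced graph and a side `s` that has room for the
triangle `xyz`, and put `a` there. If `du` is on another side, then `z` is in the cut, so `x` and
`y` are not both in it, and `u` can join the cut; otherwise put `u` on side `s`. Likewise for `v`.
-/
theorem Ctx.apex (X : Ctx A G) {a u v x y z du dv p₁ q₁ p₂ q₂ p₃ q₃ : V}
    (hu : Str G u a x y du) (hv : Str G v a x y dv) (hne : u ≠ v) (huv : ¬ G.Adj u v)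
    (hN : ∀ p, G.Adj a p ↔ p = u ∨ p = v ∨ p = x ∨ p = y ∨ p = z)
    (zu : z ≠ u) (zv : z ≠ v) (zx : z ≠ x) (zy : z ≠ y)
    (m₁ : p₁ ∈ A) (n₁ : q₁ ∈ A) (m₂ : p₂ ∈ A) (n₂ : q₂ ∈ A) (m₃ : p₃ ∈ A) (n₃ : q₃ ∈ A)
    (hxz : (G ⊔ edge p₁ q₁ ⊔ edge p₂ q₂ ⊔ edge p₃ q₃).Adj x z)
    (hyz : (G ⊔ edge p₁ q₁ ⊔ edge p₂ q₂ ⊔ edge p₃ q₃).Adj y z)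
    (hdu : z = du ∨ (G ⊔ edge p₁ q₁ ⊔ edge p₂ q₂ ⊔ edge p₃ q₃).Adj z du)
    (hdv : z = dv ∨ (G ⊔ edge p₁ q₁ ⊔ edge p₂ q₂ ⊔ edge p₃ q₃).Adj z dv) : False := by
  have ua := (hu.nb a).2 (by simp)
  have ux := (hu.nb x).2 (by simp)
  have uy := (hu.nb y).2 (by simp)
  have ud := (hu.nb du).2 (by simp)
  have va := (hv.nb a).2 (by simp)
  have vx := (hv.nb x).2 (by simp)
  have vy := (hv.nb y).2 (by simp)
  have vd := (hv.nb dv).2 (by simp)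
  have az := (hN z).2 (by simp)
  have xy := hu.bc
  have ax := hu.ab
  have ay := hu.ac
  have := hu.ad
  have := hu.bd
  have := hu.cd
  have := hv.ad
  have := hv.bd
  have := hv.cd
  have nua := ua.ne
  have nux := ux.ne
  have nuy := uy.ne
  have nud := ud.ne
  have nva := va.ne
  have nvx := vx.ne
  have nvy := vy.ne
  have nvd := vd.ne
  have naz := az.ne
  have nax := ax.ne
  have nay := ay.ne
  have nxy := xy.ne
  have nduv : du ≠ v := by rintro rfl; exact huv ud
  have ndvu : dv ≠ u := by rintro rfl; exact huv vd.symm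
  refine X.reduce_three (a := a) (u := u) (v := v) {u, v, x, y, z} {x, y, du} {x, y, dv}
    (X.sub _ _ ax) (X.sub _ _ ua) (X.sub _ _ va) nua.symm nva.symm hne
    (by simp [hN]) (by simp [ux, uy, ud, nax.symm, nay.symm, hu.ad.symm])
    (by simp [vx, vy, vd, nax.symm, nay.symm, hv.ad.symm, nux.symm, nuy.symm, ndvu])
    (by grind) (by grind) (by grind)
    m₁ n₁ m₂ n₂ m₃ n₃ ?_
  intro c hs ht
  have Hxy : (G ⊔ edge p₁ q₁ ⊔ edge p₂ q₂ ⊔ edge p₃ q₃).Adj x y := by simp [xy]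
  have px : x ≠ a ∧ x ≠ u ∧ x ≠ v := ⟨nax.symm, nux.symm, nvx.symm⟩
  have py : y ≠ a ∧ y ≠ u ∧ y ≠ v := ⟨nay.symm, nuy.symm, nvy.symm⟩
  have pz : z ≠ a ∧ z ≠ u ∧ z ≠ v := ⟨naz.symm, zu, zv⟩
  have pdu : du ≠ a ∧ du ≠ u ∧ du ≠ v := ⟨hu.ad.symm, nud.symm, nduv⟩
  have pdv : dv ≠ a ∧ dv ≠ u ∧ dv ≠ v := ⟨hv.ad.symm, ndvu, nvd.symm⟩
  have t1 := ht x y z px py pz Hxy hxz hyz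
  have sdu : c z = c du ∨ c z = 0 ∨ c du = 0 := by
    rcases hdu with rfl | h
    · simp
    · rcases hs z du pz pdu h with h | h | h <;> simp [h]
  have sdv : c z = c dv ∨ c z = 0 ∨ c dv = 0 := by
    rcases hdv with rfl | h
    · simp
    · rcases hs z dv pz pdv h with h | h | h <;> simp [h]
  obtain ⟨s, hs0, hsx, hsy, hsz⟩ := exists_side_three (hs x y px py Hxy) (hs x z px pz hxz)
    (hs y z py pz hyz)
  have hun := hu.nb
  have hvn := hv.nb
  clear hs ht hxz hyz hdu hdv Hxy hu hv
  refine ⟨fun p => if p = a then s else if p = u then (if c du = 0 ∨ c du = s then s else 0)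
    else if p = v then (if c dv = 0 ∨ c dv = s then s else 0) else c p, by grind, ?_, ?_⟩
  · rintro r (rfl | rfl | rfl) p hp
    · have := (hN p).1 hp
      grind
    · have := (hun p).1 hp
      grind
    · have := (hvn p).1 hp
      grind
  · rintro r (rfl | rfl | rfl) hr p q hp hq hrp hrq
    · grind
    · have := (hun p).1 hrp
      have := (hun q).1 hrq
      grind
    · have := (hvn p).1 hrp
      have := (hvn q).1 hrq
      grind

/-- In the situation of `Ctx.apex`, no three added edges make `x, y, du, dv` a `K₄` and `z`
adjacent to `du`: put `u` and `v` on a side `s` with room for that `K₄`. If `z` is on another side,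
then `du` is in the cut, so `x` and `y` are not both in it, and `a` can join the cut; otherwise put
`a` on side `s`. -/
theorem Ctx.four_clique (X : Ctx A G) {a u v x y z du dv p₁ q₁ p₂ q₂ p₃ q₃ : V}
    (hu : Str G u a x y du) (hv : Str G v a x y dv) (hne : u ≠ v) (huv : ¬ G.Adj u v)
    (hN : ∀ p, G.Adj a p ↔ p = u ∨ p = v ∨ p = x ∨ p = y ∨ p = z)
    (zu : z ≠ u) (zv : z ≠ v) (zx : z ≠ x) (zy : z ≠ y)
    (m₁ : p₁ ∈ A) (n₁ : q₁ ∈ A) (m₂ : p₂ ∈ A) (n₂ : q₂ ∈ A) (m₃ : p₃ ∈ A) (n₃ : q₃ ∈ A)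
    (hxu : (G ⊔ edge p₁ q₁ ⊔ edge p₂ q₂ ⊔ edge p₃ q₃).Adj x du)
    (hxv : (G ⊔ edge p₁ q₁ ⊔ edge p₂ q₂ ⊔ edge p₃ q₃).Adj x dv)
    (hyu : (G ⊔ edge p₁ q₁ ⊔ edge p₂ q₂ ⊔ edge p₃ q₃).Adj y du)
    (hyv : (G ⊔ edge p₁ q₁ ⊔ edge p₂ q₂ ⊔ edge p₃ q₃).Adj y dv)
    (huv' : (G ⊔ edge p₁ q₁ ⊔ edge p₂ q₂ ⊔ edge p₃ q₃).Adj du dv)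
    (hzu : (G ⊔ edge p₁ q₁ ⊔ edge p₂ q₂ ⊔ edge p₃ q₃).Adj z du) : False := by
  have ua := (hu.nb a).2 (by simp)
  have ux := (hu.nb x).2 (by simp)
  have uy := (hu.nb y).2 (by simp)
  have ud := (hu.nb du).2 (by simp)
  have va := (hv.nb a).2 (by simp)
  have vx := (hv.nb x).2 (by simp)
  have vy := (hv.nb y).2 (by simp)
  have vd := (hv.nb dv).2 (by simp)
  have az := (hN z).2 (by simp)
  have xy := hu.bc
  have ax := hu.ab
  have ay := hu.ac
  have := hu.ad
  have := hu.bd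
  have := hu.cd
  have := hv.ad
  have := hv.bd
  have := hv.cd
  have nua := ua.ne
  have nux := ux.ne
  have nuy := uy.ne
  have nud := ud.ne
  have nva := va.ne
  have nvx := vx.ne
  have nvy := vy.ne
  have nvd := vd.ne
  have naz := az.ne
  have nax := ax.ne
  have nay := ay.ne
  have nxy := xy.ne
  have nduv : du ≠ v := by rintro rfl; exact huv ud
  have ndvu : dv ≠ u := by rintro rfl; exact huv vd.symm
  refine X.reduce_three (a := a) (u := u) (v := v) {u, v, x, y, z} {x, y, du} {x, y, dv}
    (X.sub _ _ ax) (X.sub _ _ ua) (X.sub _ _ va) nua.symm nva.symm hne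
    (by simp [hN]) (by simp [ux, uy, ud, nax.symm, nay.symm, hu.ad.symm])
    (by simp [vx, vy, vd, nax.symm, nay.symm, hv.ad.symm, nux.symm, nuy.symm, ndvu])
    (by grind) (by grind) (by grind)
    m₁ n₁ m₂ n₂ m₃ n₃ ?_
  intro c hs ht
  have Hxy : (G ⊔ edge p₁ q₁ ⊔ edge p₂ q₂ ⊔ edge p₃ q₃).Adj x y := by simp [xy]
  have px : x ≠ a ∧ x ≠ u ∧ x ≠ v := ⟨nax.symm, nux.symm, nvx.symm⟩
  have py : y ≠ a ∧ y ≠ u ∧ y ≠ v := ⟨nay.symm, nuy.symm, nvy.symm⟩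
  have pz : z ≠ a ∧ z ≠ u ∧ z ≠ v := ⟨naz.symm, zu, zv⟩
  have pdu : du ≠ a ∧ du ≠ u ∧ du ≠ v := ⟨hu.ad.symm, nud.symm, nduv⟩
  have pdv : dv ≠ a ∧ dv ≠ u ∧ dv ≠ v := ⟨hv.ad.symm, ndvu, nvd.symm⟩
  have s1 := hs z du pz pdu hzu
  obtain ⟨s, hs0, hsx, hsy, hsu, hsv⟩ := exists_side_four (hs x y px py Hxy) (hs x du px pdu hxu)
    (hs y du py pdu hyu) (hs x dv px pdv hxv) (hs y dv py pdv hyv) (hs du dv pdu pdv huv')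
  have t1 := ht x y du px py pdu Hxy hxu hyu
  have t2 := ht x y dv px py pdv Hxy hxv hyv
  have hun := hu.nb
  have hvn := hv.nb
  clear hs ht hxu hxv hyu hyv huv' hzu Hxy hu hv
  refine ⟨fun p => if p = a then (if c z = 0 ∨ c z = s then s else 0) else if p = u then s
    else if p = v then s else c p, by grind, ?_, ?_⟩
  · rintro r (rfl | rfl | rfl) p hp
    · have := (hN p).1 hp
      grind
    · have := (hun p).1 hp
      grind
    · have := (hvn p).1 hp
      grind
  · rintro r (rfl | rfl | rfl) hr p q hp hq hrp hrq
    · have := (hN p).1 hrp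
      have := (hN q).1 hrq
      grind
    · grind
    · grind

/-- Let `u` and `v` be vertices of degree four with mates `a, x, y` and `a, y, z`, where `a` has
degree five. Then no three added edges make `xz`, `z du` and `x dv` edges (or trivial), by the same
extension as in `Ctx.apex`. -/
theorem Ctx.fan (X : Ctx A G) {a u v x y z du dv p₁ q₁ p₂ q₂ p₃ q₃ : V}
    (hu : Str G u a x y du) (hv : Str G v a y z dv) (hne : u ≠ v) (huv : ¬ G.Adj u v)
    (hN : ∀ p, G.Adj a p ↔ p = u ∨ p = v ∨ p = x ∨ p = y ∨ p = z)
    (zu : z ≠ u) (xv : x ≠ v) (zx : z ≠ x)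
    (m₁ : p₁ ∈ A) (n₁ : q₁ ∈ A) (m₂ : p₂ ∈ A) (n₂ : q₂ ∈ A) (m₃ : p₃ ∈ A) (n₃ : q₃ ∈ A)
    (hxz : (G ⊔ edge p₁ q₁ ⊔ edge p₂ q₂ ⊔ edge p₃ q₃).Adj x z)
    (hdu : z = du ∨ (G ⊔ edge p₁ q₁ ⊔ edge p₂ q₂ ⊔ edge p₃ q₃).Adj z du)
    (hdv : x = dv ∨ (G ⊔ edge p₁ q₁ ⊔ edge p₂ q₂ ⊔ edge p₃ q₃).Adj x dv) : False := by
  have ua := (hu.nb a).2 (by simp)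
  have ux := (hu.nb x).2 (by simp)
  have uy := (hu.nb y).2 (by simp)
  have ud := (hu.nb du).2 (by simp)
  have va := (hv.nb a).2 (by simp)
  have vz := (hv.nb z).2 (by simp)
  have yz := hv.bc
  have vy := (hv.nb y).2 (by simp)
  have vd := (hv.nb dv).2 (by simp)
  have az := (hN z).2 (by simp)
  have xy := hu.bc
  have ax := hu.ab
  have ay := hu.ac
  have := hu.ad
  have := hu.bd
  have := hu.cd
  have := hv.ad
  have := hv.bd
  have := hv.cd
  have nua := ua.ne
  have nux := ux.ne
  have nuy := uy.ne
  have nud := ud.ne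
  have nva := va.ne
  have nvz := vz.ne
  have nyz := yz.ne
  have nvy := vy.ne
  have nvd := vd.ne
  have naz := az.ne
  have nax := ax.ne
  have nay := ay.ne
  have nxy := xy.ne
  have nduv : du ≠ v := by rintro rfl; exact huv ud
  have ndvu : dv ≠ u := by rintro rfl; exact huv vd.symm
  refine X.reduce_three (a := a) (u := u) (v := v) {u, v, x, y, z} {x, y, du} {y, z, dv}
    (X.sub _ _ ax) (X.sub _ _ ua) (X.sub _ _ va) nua.symm nva.symm hne
    (by simp [hN]) (by simp [ux, uy, ud, nax.symm, nay.symm, hu.ad.symm])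
    (by simp [vz, vy, vd, naz.symm, nay.symm, hv.ad.symm, zu, nuy.symm, ndvu])
    (by grind) (by grind) (by grind)
    m₁ n₁ m₂ n₂ m₃ n₃ ?_
  intro c hs ht
  have Hxy : (G ⊔ edge p₁ q₁ ⊔ edge p₂ q₂ ⊔ edge p₃ q₃).Adj x y := by simp [xy]
  have hyz : (G ⊔ edge p₁ q₁ ⊔ edge p₂ q₂ ⊔ edge p₃ q₃).Adj y z := by simp [yz]
  have px : x ≠ a ∧ x ≠ u ∧ x ≠ v := ⟨nax.symm, nux.symm, xv⟩
  have py : y ≠ a ∧ y ≠ u ∧ y ≠ v := ⟨nay.symm, nuy.symm, nvy.symm⟩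
  have pz : z ≠ a ∧ z ≠ u ∧ z ≠ v := ⟨naz.symm, zu, nvz.symm⟩
  have pdu : du ≠ a ∧ du ≠ u ∧ du ≠ v := ⟨hu.ad.symm, nud.symm, nduv⟩
  have pdv : dv ≠ a ∧ dv ≠ u ∧ dv ≠ v := ⟨hv.ad.symm, ndvu, nvd.symm⟩
  have t1 := ht x y z px py pz Hxy hxz hyz
  have sdu : c z = c du ∨ c z = 0 ∨ c du = 0 := by
    rcases hdu with rfl | h
    · simp
    · rcases hs z du pz pdu h with h | h | h <;> simp [h]
  have sdv : c x = c dv ∨ c x = 0 ∨ c dv = 0 := by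
    rcases hdv with rfl | h
    · simp
    · rcases hs x dv px pdv h with h | h | h <;> simp [h]
  obtain ⟨s, hs0, hsx, hsy, hsz⟩ := exists_side_three (hs x y px py Hxy) (hs x z px pz hxz)
    (hs y z py pz hyz)
  have hun := hu.nb
  have hvn := hv.nb
  clear hs ht hxz hyz hdu hdv Hxy hu hv
  refine ⟨fun p => if p = a then s else if p = u then (if c du = 0 ∨ c du = s then s else 0)
    else if p = v then (if c dv = 0 ∨ c dv = s then s else 0) else c p, by grind, ?_, ?_⟩
  · rintro r (rfl | rfl | rfl) p hp
    · have := (hN p).1 hp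
      grind
    · have := (hun p).1 hp
      grind
    · have := (hvn p).1 hp
      grind
  · rintro r (rfl | rfl | rfl) hr p q hp hq hrp hrq
    · grind
    · have := (hun p).1 hrp
      have := (hun q).1 hrq
      grind
    · have := (hvn p).1 hrp
      have := (hvn q).1 hrq
      grind

/-- Two vertices of degree four do not have the same mates `a, x, y` with `a` of degree five. If one
of the edges required in `Ctx.apex` is there already or not needed, three further edges suffice.
Otherwise `z` has no neighbour among `x, y, du, dv`; since `{x, y, z, du, dv}`, which surrounds
`{a, u, v}`, does not induce a forest, `x, y, du, dv` miss only two edges of a `K₄`, and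
`Ctx.four_clique` applies. -/
theorem Ctx.not_share_two (X : Ctx A G) {a u v x y z du dv : V}
    (hu : Str G u a x y du) (hv : Str G v a x y dv) (hne : u ≠ v) (huv : ¬ G.Adj u v)
    (hN : ∀ p, G.Adj a p ↔ p = u ∨ p = v ∨ p = x ∨ p = y ∨ p = z)
    (zu : z ≠ u) (zv : z ≠ v) (zx : z ≠ x) (zy : z ≠ y) : False := by
  have h10 := X.ten_le_card
  have hxA := X.sub _ _ hu.bc
  have hyA := X.sub _ _ hu.bc.symm
  have haA := X.sub _ _ hu.ab
  have huA := X.sub _ _ ((hN u).2 (by simp)).symm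
  have hvA := X.sub _ _ ((hN v).2 (by simp)).symm
  have hzA := X.sub _ _ ((hN z).2 (by simp)).symm
  have hduA := X.sub _ _ ((hu.nb du).2 (by simp)).symm
  have hdvA := X.sub _ _ ((hv.nb dv).2 (by simp)).symm
  have key := @Ctx.apex V _ A G _ X a u v x y z du dv
  have key := fun p₁ q₁ p₂ q₂ p₃ q₃ => @key p₁ q₁ p₂ q₂ p₃ q₃ hu hv hne huv hN zu zv zx zy
  by_cases c1 : G.Adj z x
  · refine key y z z du z dv hyA hzA hzA hduA hzA hdvA ?_ ?_ ?_ ?_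
    · simp [c1.symm]
    · simp [edge_adj, zy.symm]
    · by_cases h : z = du <;> simp [edge_adj, h]
    · by_cases h : z = dv <;> simp [edge_adj, h]
  by_cases c2 : G.Adj z y
  · refine key x z z du z dv hxA hzA hzA hduA hzA hdvA ?_ ?_ ?_ ?_
    · simp [edge_adj, zx.symm]
    · simp [c2.symm]
    · by_cases h : z = du <;> simp [edge_adj, h]
    · by_cases h : z = dv <;> simp [edge_adj, h]
  by_cases c3 : z = du ∨ G.Adj z du
  · refine key x z y z z dv hxA hzA hyA hzA hzA hdvA ?_ ?_ ?_ ?_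
    · simp [edge_adj, zx.symm]
    · simp [edge_adj, zy.symm]
    · rcases c3 with h | h <;> simp [h]
    · by_cases h : z = dv <;> simp [edge_adj, h]
  by_cases c4 : z = dv ∨ G.Adj z dv
  · refine key x z y z z du hxA hzA hyA hzA hzA hduA ?_ ?_ ?_ ?_
    · simp [edge_adj, zx.symm]
    · simp [edge_adj, zy.symm]
    · by_cases h : z = du <;> simp [edge_adj, h]
    · rcases c4 with h | h <;> simp [h]
  by_cases c5 : du = dv
  · subst c5
    refine key x z y z z du hxA hzA hyA hzA hzA hduA ?_ ?_ ?_ ?_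
    · simp [edge_adj, zx.symm]
    · simp [edge_adj, zy.symm]
    · by_cases h : z = du <;> simp [edge_adj, h]
    · by_cases h : z = du <;> simp [edge_adj, h]
  clear key
  rw [not_or] at c3 c4
  by_cases hC : G.Adj du dv ∧ (G.Adj du x ∨ G.Adj du y) ∧ (G.Adj dv x ∨ G.Adj dv y)
  · obtain ⟨h0, h1, h2⟩ := hC
    have choose_nbr : ∀ d, x ≠ d → y ≠ d → (G.Adj d x ∨ G.Adj d y) → ∃ t ∈ A,
        (G.Adj x d ∨ x = t) ∧ (G.Adj y d ∨ y = t) := by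
      rintro d - - (h | h)
      · exact ⟨y, hyA, Or.inl h.symm, Or.inr rfl⟩
      · exact ⟨x, hxA, Or.inr rfl, Or.inl h.symm⟩
    obtain ⟨t, htA, t1, t2⟩ := choose_nbr du hu.bd hu.cd h1
    obtain ⟨r, hrA, r1, r2⟩ := choose_nbr dv hv.bd hv.cd h2
    refine X.four_clique hu hv hne huv hN zu zv zx zy htA hduA hrA hdvA hzA hduA
      ?_ ?_ ?_ ?_ ?_ ?_
    · rcases t1 with h | rfl
      · simp [h]
      · simp [edge_adj, hu.bd]
    · rcases r1 with h | rfl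
      · simp [h]
      · simp [edge_adj, hv.bd]
    · rcases t2 with h | rfl
      · simp [h]
      · simp [edge_adj, hu.cd]
    · rcases r2 with h | rfl
      · simp [h]
      · simp [edge_adj, hv.cd]
    · simp [h0]
    · simp [edge_adj, c3.1]
  · have hc : ({x, y, z, du, dv} : Finset V).card ≤ 5 := Finset.card_le_five
    have hc' : ({a, u, v} : Finset V).card ≤ 3 := Finset.card_le_three
    refine X.nbr_not_forest {a, u, v} {x, y, z, du, dv} ?_ (by simp) (by omega) ?_ ?_
    · intro p hp
      simp only [Finset.mem_insert, Finset.mem_singleton] at hp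
      rcases hp with rfl | rfl | rfl <;> assumption
    · have hun := hu.nb
      have hvn := hv.nb
      intro s hs p hp
      simp only [Finset.mem_insert, Finset.mem_singleton] at hs ⊢
      rcases hs with rfl | rfl | rfl
      · rcases (hN p).1 hp with h | h | h | h | h <;> simp [h]
      · rcases (hun p).1 hp with h | h | h | h <;> simp [h]
      · rcases (hvn p).1 hp with h | h | h | h <;> simp [h]
    · refine (forest_four_of hu.nbc hv.nbc hC).insert z (by
        intro w hw
        simpa [or_left_comm, or_assoc] using hw) ?_
      have c5 := c3.2
      have c6 := c4.2
      clear hu hv hC hc hc'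
      simp only [Finset.mem_insert, Finset.mem_singleton]
      have := G.irrefl (v := z)
      have h0 : ∀ p, p = x ∨ p = y ∨ p = z ∨ p = du ∨ p = dv → ¬ G.Adj z p := by
        rintro p (h | h | h | h | h) <;> rw [h] <;> assumption
      intro p q hp _ hzp
      exact (h0 p hp hzp).elim

/-- Two vertices of degree four with a common mate `a` of degree five have no further mate `y` in
common. -/
theorem Ctx.not_share [DecidableRel G.Adj] (X : Ctx A G) {a u v x y q du dv : V}
    (ha : G.degree a = 5) (hu : Str G u a x y du) (hv : Str G v a y q dv) (hne : u ≠ v) :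
    False := by
  have ua := (hu.nb a).2 (by simp)
  have va := (hv.nb a).2 (by simp)
  have ux := (hu.nb x).2 (by simp)
  have uy := (hu.nb y).2 (by simp)
  have vy := (hv.nb y).2 (by simp)
  have vq := (hv.nb q).2 (by simp)
  have xv : x ≠ v := by
    rintro rfl
    exact X.mate_degree_ne_four hu.rot hv.degree
  have qu : q ≠ u := by
    rintro rfl
    exact X.mate_degree_ne_four hv.rot.rot hu.degree
  have huv : ¬ G.Adj u v := by
    intro h
    rcases (hv.nb u).1 h.symm with h' | h' | h' | h'
    · exact ua.ne h'
    · exact uy.ne h'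
    · exact qu h'.symm
    · subst h'
      exact hv.nab ⟨ua.symm, uy.symm⟩
  have hxy := hu.bc
  obtain ⟨z, hzT, hN⟩ := exists_last_nbr (G := G) (v := a) (T := {u, v, x, y})
    (by simp [ua.symm, va.symm, hu.ab, hu.ac])
    (by
      rw [ha, Finset.card_insert_of_notMem, Finset.card_insert_of_notMem,
        Finset.card_insert_of_notMem, Finset.card_singleton] <;>
      simp [hne, ux.ne, uy.ne, xv.symm, vy.ne, hxy.ne])
  simp only [Finset.mem_insert, Finset.mem_singleton, not_or] at hzT hN
  have hN' : ∀ p, G.Adj a p ↔ p = u ∨ p = v ∨ p = x ∨ p = y ∨ p = z := by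
    intro p
    rw [hN]
    tauto
  obtain ⟨zu, zv, zx, zy⟩ := hzT
  by_cases hq : q = x
  · subst hq
    exact X.not_share_two hu hv.swap hne huv hN' zu zv zx zy
  have hqz : q = z := by
    rcases (hN' q).1 hv.ac with h | h | h | h | h
    · exact (qu h).elim
    · exact (vq.ne h.symm).elim
    · exact (hq h).elim
    · exact (hv.bc.ne h.symm).elim
    · exact h
  subst hqz
  have hxA := X.sub _ _ ux.symm
  have hqA := X.sub _ _ vq.symm
  have hduA := X.sub _ _ ((hu.nb du).2 (by simp)).symm
  have hdvA := X.sub _ _ ((hv.nb dv).2 (by simp)).symm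
  refine X.fan hu hv hne huv hN' zu xv zx hxA hqA hqA hduA hxA hdvA ?_ ?_ ?_
  · simp [edge_adj, Ne.symm zx]
  · by_cases h : q = du <;> simp [edge_adj, h]
  · by_cases h : x = dv <;> simp [edge_adj, h]

/-- A vertex `a` of degree five is a mate of at most one vertex of degree four: for two of them, the
other mates `x, y` and `p, q` are among the three remaining neighbours of `a`, so they overlap. -/
theorem Ctx.eq_of_degree_five [DecidableRel G.Adj] (X : Ctx A G) {a u v x y p q du dv : V}
    (ha : G.degree a = 5) (hu : Str G u a x y du) (hv : Str G v a p q dv) : u = v := by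
  by_contra hne
  by_cases h1 : y = p
  · subst h1
    exact X.not_share ha hu hv hne
  by_cases h2 : y = q
  · subst h2
    exact X.not_share ha hu hv.swap hne
  by_cases h3 : x = p
  · subst h3
    exact X.not_share ha hu.swap hv hne
  by_cases h4 : x = q
  · subst h4
    exact X.not_share ha hu.swap hv.swap hne
  have xv : x ≠ v := by
    rintro rfl
    exact X.mate_degree_ne_four hu.rot hv.degree
  have yv : y ≠ v := by
    rintro rfl
    exact X.mate_degree_ne_four hu.rot.rot hv.degree
  have pu : p ≠ u := by
    rintro rfl
    exact X.mate_degree_ne_four hv.rot hu.degree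
  have qu : q ≠ u := by
    rintro rfl
    exact X.mate_degree_ne_four hv.rot.rot hu.degree
  have ux := (hu.nb x).2 (by simp)
  have uy := (hu.nb y).2 (by simp)
  have vp := (hv.nb p).2 (by simp)
  have vq := (hv.nb q).2 (by simp)
  have hsub : ({u, v, x, y, p, q} : Finset V) ⊆ G.neighborFinset a := by
    intro t ht
    have ua := (hu.nb a).2 (by simp)
    have va := (hv.nb a).2 (by simp)
    simp only [Finset.mem_insert, Finset.mem_singleton] at ht
    rw [mem_neighborFinset]
    rcases ht with rfl | rfl | rfl | rfl | rfl | rfl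
    exacts [ua.symm, va.symm, hu.ab, hu.ac, hv.ab, hv.ac]
  have hc := Finset.card_le_card hsub
  rw [G.card_neighborFinset_eq_degree, ha, Finset.card_insert_of_notMem,
    Finset.card_insert_of_notMem, Finset.card_insert_of_notMem, Finset.card_insert_of_notMem,
    Finset.card_insert_of_notMem, Finset.card_singleton] at hc
  · omega
  all_goals simp [hv.bc.ne, h1, h2, h3, h4, hu.bc.ne, hne, ux.ne, uy.ne, vp.ne, vq.ne, xv.symm,
    yv.symm, pu.symm, qu.symm]

/-! ### Discharging -/

/-- The discharging inequality: each vertex starts with four times its degree, each vertex of degree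
four receives `1` from each of its three mates, and everybody ends up with at least `19`. Here `S`
is a set of degree-four vertices that have `w` as a mate. -/
theorem Ctx.charge [DecidableRel G.Adj] (X : Ctx A G) {w : V} (hw : w ∈ A) (S : Finset V)
    (hS : ∀ v ∈ S, G.degree v = 4 ∧ ∃ x y d, Str G v w x y d) :
    19 + S.card ≤ 4 * G.degree w + if G.degree w = 4 then 3 else 0 := by
  have h10 := X.ten_le_card
  have h4 := X.four_le_degree (by omega) hw
  have hsub : S ⊆ G.neighborFinset w := by
    intro v hv
    obtain ⟨-, x, y, d, h⟩ := hS v hv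
    rw [mem_neighborFinset]
    exact ((h.nb w).2 (by simp)).symm
  have hle := Finset.card_le_card hsub
  rw [G.card_neighborFinset_eq_degree] at hle
  rcases S.eq_empty_or_nonempty with rfl | ⟨v, hv⟩
  · rw [Finset.card_empty]
    split_ifs <;> omega
  obtain ⟨hv4, x, y, d, h⟩ := hS v hv
  have hw4 : G.degree w ≠ 4 := fun hw4 => X.mate_degree_ne_four h hw4
  rw [if_neg hw4]
  by_cases hw5 : G.degree w = 5
  · have : S.card ≤ 1 := by
      refine Finset.card_le_one.2 fun v hv v' hv' => ?_
      obtain ⟨-, x, y, d, h⟩ := hS v hv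
      obtain ⟨-, x', y', d', h'⟩ := hS v' hv'
      exact X.eq_of_degree_five hw5 h h'
    omega
  by_cases hw6 : G.degree w = 6
  -- If all six neighbours of `w` had degree four, so would a mate `x` of `v`.
  · have : S.card ≠ 6 := by
      intro h6
      have hSN : S = G.neighborFinset w := Finset.eq_of_subset_of_card_le hsub (by
        rw [G.card_neighborFinset_eq_degree]
        omega)
      have hx : x ∈ S := by
        rw [hSN, mem_neighborFinset]
        exact h.ab
      exact X.mate_degree_ne_four h.rot (hS x hx).1
    omega
  omega

theorem Ctx.false (X : Ctx A G) : False := by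
  classical
  set F := A.filter fun v => G.degree v = 4 with hF
  have h1 := Finset.sum_card_bipartiteAbove_eq_sum_card_bipartiteBelow
    (s := F) (t := A) (fun v w => ∃ x y d, Str G v w x y d)
  have h2 : F.card * 3 ≤
      ∑ v ∈ F, (A.bipartiteAbove (fun v w => ∃ x y d, Str G v w x y d) v).card := by
    refine Finset.card_nsmul_le_sum F _ 3 fun v hv => ?_
    obtain ⟨a, b, c, d, h⟩ := X.exists_str (Finset.mem_filter.1 hv).2
    have hsub : ({a, b, c} : Finset V) ⊆
        A.bipartiteAbove (fun v w => ∃ x y d, Str G v w x y d) v := by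
      intro w hw
      simp only [Finset.mem_insert, Finset.mem_singleton] at hw
      rw [Finset.mem_bipartiteAbove]
      rcases hw with rfl | rfl | rfl
      · exact ⟨X.sub _ _ h.ab, _, _, _, h⟩
      · exact ⟨X.sub _ _ h.bc, _, _, _, h.rot⟩
      · exact ⟨X.sub _ _ h.bc.symm, _, _, _, h.rot.rot⟩
    have h3 : ({a, b, c} : Finset V).card = 3 :=
      Finset.card_eq_three.2 ⟨a, b, c, h.ab.ne, h.ac.ne, h.bc.ne, rfl⟩
    exact h3 ▸ Finset.card_le_card hsub
  have h3 : ∑ w ∈ A, (19 + (F.bipartiteBelow (fun v w => ∃ x y d, Str G v w x y d) w).card) ≤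
      ∑ w ∈ A, (4 * G.degree w + if G.degree w = 4 then 3 else 0) := by
    refine Finset.sum_le_sum fun w hw => X.charge hw _ fun v hv => ?_
    rw [Finset.mem_bipartiteBelow, hF, Finset.mem_filter] at hv
    exact ⟨hv.1.2, hv.2⟩
  rw [Finset.sum_add_distrib, Finset.sum_add_distrib, ← Finset.sum_filter, ← hF,
    Finset.sum_const, Finset.sum_const, ← Finset.mul_sum] at h3
  have h4 : ∑ w ∈ A, G.degree w ≤ ∑ w, G.degree w :=
    Finset.sum_le_sum_of_subset (Finset.subset_univ A)
  have h5 := sum_degree_eq G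
  have h6 := X.few
  simp only [smul_eq_mul] at h3
  omega

theorem cut_of_few_edges (n : ℕ) : ∀ (A : Finset V) (G : SimpleGraph V), A.card = n → 4 ≤ A.card →
    (∀ p q, G.Adj p q → p ∈ A) → 8 * ec G + 28 < 19 * A.card → Cut A G := by
  induction n using Nat.strong_induction_on with
  | _ n ih =>
    intro A G hA h4 hsub hfew
    by_contra hcut
    exact Ctx.false ⟨fun B H hB h4 hs hf => ih B.card (hA ▸ hB) B H rfl h4 hs hf,
      hsub, h4, hfew, hcut⟩

end ForestCut

/-- every finite simple graph with `n ≥ 4` vertices and fewer than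
`(19n − 28)/8` edges has a forest cut. -/
theorem stmt0 {V : Type*} [Fintype V] (G : SimpleGraph V)
    (hn : 4 ≤ Nat.card V)
    (he : (Nat.card G.edgeSet : ℝ) < (19 * Nat.card V - 28) / 8) :
    HasForestCut G := by
  classical
  refine (ForestCut.cut_of_few_edges _ Finset.univ G rfl ?_ (by simp) ?_).hasForestCut
  · rwa [Finset.card_univ, ← Nat.card_eq_fintype_card]
  · rw [Finset.card_univ, ← Nat.card_eq_fintype_card, ForestCut.ec, ← Nat.card_coe_set_eq]
    have h : (8 * Nat.card G.edgeSet + 28 : ℝ) < 19 * Nat.card V := by linarith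
    exact_mod_cast h
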